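/- The element δ = δ_1 + δ_2 of W ⊗ U(g) is odd with respect to the ℤ/2-grading and is g-invariant: [Γ(A) ⊗ 1 + 1 ⊗ A, δ] = 0 for all A ∈ g, where the bracket is the super-commutator in the superalgebra W ⊗ U(g). Indeed each of δ_1 and δ_2 is separately g-invariant. -/

import Mathlib

/-!
Why `δ₁` and `δ₂` are invariant. Writing `[·,·]` for the super-commutator, the Weyl relations
give `[Γ_a, X_d] = -Σ_c (-1)^{[a][c]} f a d c X_c` (`gam_X`) and
`[Γ_a, ∂_d] = (-1)^{[a]} Σ_b f a b d ∂_b` (`gam_D`); that is, `Γ_a` acts on the `X`'s by the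
coadjoint and on the `∂`'s by the adjoint representation. With the Jacobi identity these yield
`[Γ_a, Γ_d] = Σ_e f a e d Γ_e` (`gam_gam`), so both families `E_d` and `Γ_d` transform in the
adjoint representation under `Γ_a + E_a`, while the family `X_d` transforms in the dual one.
The elements `Σ_d (-1)^{[d]} X_d E_d` and `Σ_d (-1)^{[d]} X_d Γ_d` are therefore canonical
contractions of a representation with its dual, hence invariant (`contraction_invariant`).

The computation is carried out in an arbitrary associative algebra `R` with elements `X`, `D`,
`E` satisfying the relations, and then specialised to `W ⊗ U(g)`. Oddness is a parity count on
each monomial.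
-/

set_option synthInstance.maxHeartbeats 1000000
set_option maxHeartbeats 1000000

/-!
STATEMENT 3: the element `δ = δ₁ + δ₂` of `W ⊗ U(g)` is odd and `g`-invariant:
`[Γ(A) ⊗ 1 + 1 ⊗ A, δ] = 0` for all `A ∈ g` (super-commutator in the superalgebra
`W ⊗ U(g)`); indeed each of `δ₁`, `δ₂` is separately `g`-invariant.

We present the super tensor product `W ⊗ U(g)` by generators `X a, ∂ a` (the Weyl
superalgebra `W = W_{Πg*}`, parity `p a + 1`) and `E a` (the universal enveloping
superalgebra `U(g)`, parity `p a`), with the two factors super-commuting.  Here `g` has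
homogeneous basis `{E_a}_{a∈Λ}` and structure constants `f a b c = ad(E_a)_{bc}`
(`[E_a, E_c] = Σ_b f a b c E_b`), subject to the Lie superalgebra axioms `hpar`, `hskew`,
`hjac`.  A homogeneous `A ∈ g` of parity `ε` is given by coordinates `u : Λ → ℂ` supported
in parity `ε`; for an odd element `δ`, the super-commutator is
`[Γ(A)⊗1 + 1⊗A, δ] = (Γ(A)+A)δ - (-1)^{[A]} δ(Γ(A)+A)`.  Oddness of `δ₁, δ₂` is expressed
by membership in the odd homogeneous subspace of `W ⊗ U(g)`.
-/

noncomputable section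

/-- The sign `(-1)^ε` for `ε : ℤ/2`. -/
noncomputable def sgn (ε : ZMod 2) : ℂ := if ε = 0 then 1 else -1

/-- Generators of the superalgebra `W ⊗ U(g)`: the generators `X a`, `∂ a` of the Weyl
superalgebra `W = W_{Πg*}` and the generators `E a` of `U(g)`. -/
inductive WUGen (Λ : Type) : Type
  | X : Λ → WUGen Λ
  | D : Λ → WUGen Λ
  | E : Λ → WUGen Λ

variable {Λ : Type} [DecidableEq Λ] [Fintype Λ]

/-- The parity of the generators: `[X a] = [∂ a] = p a + 1`, `[E a] = p a`. -/
def WUGen.parity (p : Λ → ZMod 2) : WUGen Λ → ZMod 2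
  | .X a => p a + 1
  | .D a => p a + 1
  | .E a => p a

/-- The defining relations of `W ⊗ U(g)` (the super tensor product of the Weyl superalgebra
`W_{Πg*}` and the universal enveloping superalgebra `U(g)`): the super-Weyl relations among
the `X a, ∂ a`, the relations `E_aE_b - (-1)^{[E_a][E_b]}E_bE_a = [E_a,E_b] = Σ_e f a e b E_e`
of `U(g)`, and super-commutation of the two tensor factors. -/
inductive WURel (p : Λ → ZMod 2) (f : Λ → Λ → Λ → ℂ) :
    FreeAlgebra ℂ (WUGen Λ) → FreeAlgebra ℂ (WUGen Λ) → Prop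
  | XX (a b : Λ) : WURel p f
      (FreeAlgebra.ι ℂ (WUGen.X a) * FreeAlgebra.ι ℂ (WUGen.X b))
      (sgn ((p a + 1) * (p b + 1)) •
        (FreeAlgebra.ι ℂ (WUGen.X b) * FreeAlgebra.ι ℂ (WUGen.X a)))
  | DD (a b : Λ) : WURel p f
      (FreeAlgebra.ι ℂ (WUGen.D a) * FreeAlgebra.ι ℂ (WUGen.D b))
      (sgn ((p a + 1) * (p b + 1)) •
        (FreeAlgebra.ι ℂ (WUGen.D b) * FreeAlgebra.ι ℂ (WUGen.D a)))
  | DX (a b : Λ) : WURel p f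
      (FreeAlgebra.ι ℂ (WUGen.D a) * FreeAlgebra.ι ℂ (WUGen.X b))
      (sgn ((p a + 1) * (p b + 1)) •
        (FreeAlgebra.ι ℂ (WUGen.X b) * FreeAlgebra.ι ℂ (WUGen.D a)) +
        if a = b then 1 else 0)
  | EE (a b : Λ) : WURel p f
      (FreeAlgebra.ι ℂ (WUGen.E a) * FreeAlgebra.ι ℂ (WUGen.E b))
      (sgn (p a * p b) •
        (FreeAlgebra.ι ℂ (WUGen.E b) * FreeAlgebra.ι ℂ (WUGen.E a)) +
        ∑ e : Λ, f a e b • FreeAlgebra.ι ℂ (WUGen.E e))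
  | EX (a b : Λ) : WURel p f
      (FreeAlgebra.ι ℂ (WUGen.E a) * FreeAlgebra.ι ℂ (WUGen.X b))
      (sgn (p a * (p b + 1)) •
        (FreeAlgebra.ι ℂ (WUGen.X b) * FreeAlgebra.ι ℂ (WUGen.E a)))
  | ED (a b : Λ) : WURel p f
      (FreeAlgebra.ι ℂ (WUGen.E a) * FreeAlgebra.ι ℂ (WUGen.D b))
      (sgn (p a * (p b + 1)) •
        (FreeAlgebra.ι ℂ (WUGen.D b) * FreeAlgebra.ι ℂ (WUGen.E a)))

/-- The superalgebra `W ⊗ U(g)`. -/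
abbrev WU (p : Λ → ZMod 2) (f : Λ → Λ → Λ → ℂ) : Type := RingQuot (WURel p f)

/-- The image of a generator in `W ⊗ U(g)`. -/
noncomputable def genWU (p : Λ → ZMod 2) (f : Λ → Λ → Λ → ℂ) (s : WUGen Λ) : WU p f :=
  RingQuot.mkAlgHom ℂ (WURel p f) (FreeAlgebra.ι ℂ s)

/-- `X a ⊗ 1`. -/
noncomputable def XU (p : Λ → ZMod 2) (f : Λ → Λ → Λ → ℂ) (a : Λ) : WU p f :=
  genWU p f (WUGen.X a)

/-- `∂ a ⊗ 1`. -/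
noncomputable def DU (p : Λ → ZMod 2) (f : Λ → Λ → Λ → ℂ) (a : Λ) : WU p f :=
  genWU p f (WUGen.D a)

/-- `1 ⊗ E a`. -/
noncomputable def EU (p : Λ → ZMod 2) (f : Λ → Λ → Λ → ℂ) (a : Λ) : WU p f :=
  genWU p f (WUGen.E a)

/-- The homogeneous subspace of `W ⊗ U(g)` of parity `ε`: the span of all products of
generators of total parity `ε`. -/
noncomputable def WUpar (p : Λ → ZMod 2) (f : Λ → Λ → Λ → ℂ) (ε : ZMod 2) :
    Submodule ℂ (WU p f) :=
  Submodule.span ℂ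
    {w | ∃ l : List (WUGen Λ),
      w = (l.map (genWU p f)).prod ∧ (l.map (WUGen.parity p)).sum = ε}

/-- `Γ_a = Γ(E_a) = -Σ_{b,c} (-1)^{[E_a][E_c]} X_c ad(E_a)_{bc} ∂_b ∈ W ⊗ U(g)`. -/
noncomputable def GamU (p : Λ → ZMod 2) (f : Λ → Λ → Λ → ℂ) (a : Λ) : WU p f :=
  -∑ b : Λ, ∑ c : Λ, (sgn (p a * p c) * f a b c) • (XU p f c * DU p f b)

/-- `δ₁ = Σ_a (-1)^{[E_a]} X_a ⊗ E_a`. -/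
noncomputable def delta1 (p : Λ → ZMod 2) (f : Λ → Λ → Λ → ℂ) : WU p f :=
  ∑ a : Λ, sgn (p a) • (XU p f a * EU p f a)

/-- `δ₂ = (1/2) Σ_a (-1)^{[E_a]} X_a Γ_a ⊗ 1`. -/
noncomputable def delta2 (p : Λ → ZMod 2) (f : Λ → Λ → Λ → ℂ) : WU p f :=
  (1 / 2 : ℂ) • ∑ a : Λ, sgn (p a) • (XU p f a * GamU p f a)

/-- `δ = δ₁ + δ₂`. -/
noncomputable def deltaWU (p : Λ → ZMod 2) (f : Λ → Λ → Λ → ℂ) : WU p f :=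
  delta1 p f + delta2 p f

/-! ### Signs -/

lemma sgn_add (x y : ZMod 2) : sgn (x + y) = sgn x * sgn y := by
  have h : ∀ z : ZMod 2, z = 0 ∨ z = 1 := by decide
  have h11 : (1 + 1 : ZMod 2) = 0 := by decide
  rcases h x with rfl | rfl <;> rcases h y with rfl | rfl <;> simp [sgn, h11]

lemma sgn_mul_self (x : ZMod 2) : sgn x * sgn x = 1 := by
  unfold sgn
  split_ifs <;> simp

/-! ### Computations in an algebra satisfying the relations -/

section Abstract

variable {R : Type} [Ring R] [Algebra ℂ R]

/-- The element `Γ_a` built from elements `X`, `D` of an arbitrary algebra. -/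
def gam (p : Λ → ZMod 2) (f : Λ → Λ → Λ → ℂ) (X D : Λ → R) (a : Λ) : R :=
  -∑ b : Λ, ∑ c : Λ, (sgn (p a * p c) * f a b c) • (X c * D b)

variable {p : Λ → ZMod 2} {f : Λ → Λ → Λ → ℂ} {X D E : Λ → R}

/-- `Γ_a` acts on the `X`'s by the coadjoint representation. -/
lemma gam_X (hpar : ∀ a b c, f a b c ≠ 0 → p b = p a + p c)
    (hXX : ∀ a b, X a * X b = sgn ((p a + 1) * (p b + 1)) • (X b * X a))
    (hDX : ∀ a b, D a * X b = sgn ((p a + 1) * (p b + 1)) • (X b * D a) + if a = b then 1 else 0)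
    (a d : Λ) :
    gam p f X D a * X d = sgn (p a * (p d + 1)) • (X d * gam p f X D a)
      - ∑ c, (sgn (p a * p c) * f a d c) • X c := by
  have term : ∀ b c, (sgn (p a * p c) * f a b c) • (X c * D b * X d) =
      sgn (p a * (p d + 1)) • (sgn (p a * p c) * f a b c) • (X d * (X c * D b))
        + if b = d then (sgn (p a * p c) * f a b c) • X c else 0 := by
    intro b c
    by_cases hf : f a b c = 0
    · simp [hf]
    have hb := hpar _ _ _ hf
    have hs : sgn (p a * (p d + 1)) =
        sgn ((p b + 1) * (p d + 1)) * sgn ((p c + 1) * (p d + 1)) := by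
      rw [← sgn_add, hb]
      congr 1
      generalize p a = x, p c = y, p d = z
      decide +revert
    rw [mul_assoc, hDX, hs, mul_add, mul_smul_comm, ← mul_assoc, hXX c d]
    split_ifs <;> simp only [smul_mul_assoc, mul_assoc, mul_one, mul_zero] <;> module
  simp only [gam, neg_mul, mul_neg, Finset.sum_mul, Finset.mul_sum, smul_mul_assoc,
    mul_smul_comm, term, Finset.sum_add_distrib, smul_neg, Finset.smul_sum]
  rw [neg_add, sub_eq_add_neg]
  congr 2
  rw [Finset.sum_comm]
  simp

/-- `Γ_a` acts on the `∂`'s by the adjoint representation, up to the sign `(-1)^{[a]}`. -/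
lemma gam_D (hpar : ∀ a b c, f a b c ≠ 0 → p b = p a + p c)
    (hDD : ∀ a b, D a * D b = sgn ((p a + 1) * (p b + 1)) • (D b * D a))
    (hDX : ∀ a b, D a * X b = sgn ((p a + 1) * (p b + 1)) • (X b * D a) + if a = b then 1 else 0)
    (a d : Λ) :
    gam p f X D a * D d = sgn (p a * (p d + 1)) • (D d * gam p f X D a)
      + sgn (p a) • ∑ b, f a b d • D b := by
  have hXD : ∀ c, X c * D d = sgn ((p d + 1) * (p c + 1)) •
      (D d * X c - if d = c then 1 else 0) := by
    intro c
    rw [hDX, add_sub_cancel_right, smul_smul, sgn_mul_self, one_smul]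
  have term : ∀ b c, (sgn (p a * p c) * f a b c) • (X c * D b * D d) =
      sgn (p a * (p d + 1)) • (sgn (p a * p c) * f a b c) • (D d * (X c * D b))
        - if d = c then (sgn (p a) * f a b d) • D b else 0 := by
    intro b c
    by_cases hf : f a b c = 0
    · by_cases hdc : d = c
      · subst hdc; simp [hf]
      · simp [hf, hdc]
    have hb := hpar _ _ _ hf
    have hs : sgn (p a * (p d + 1)) =
        sgn ((p b + 1) * (p d + 1)) * sgn ((p d + 1) * (p c + 1)) := by
      rw [← sgn_add, hb]
      congr 1
      generalize p a = x, p c = y, p d = z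
      decide +revert
    rw [mul_assoc, hDD, mul_smul_comm, ← mul_assoc, hXD]
    split_ifs with h
    · subst h
      have hs2 : sgn (p a) = sgn (p a * p d) * sgn (p a * (p d + 1)) := by
        rw [← sgn_add]
        congr 1
        generalize p a = x, p d = z
        decide +revert
      rw [hs2, hs]
      simp only [smul_mul_assoc, sub_mul, one_mul, mul_assoc]
      module
    · rw [hs]
      simp only [smul_mul_assoc, sub_zero, mul_assoc]
      module
  simp only [gam, neg_mul, mul_neg, Finset.sum_mul, Finset.mul_sum, smul_mul_assoc,
    mul_smul_comm, term, Finset.sum_sub_distrib, smul_neg, Finset.smul_sum]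
  rw [neg_sub, sub_eq_add_neg, add_comm]
  congr 1
  simp [smul_smul]

/-- `a ↦ Γ_a` is a representation of `g`: this is where the Jacobi identity enters. -/
lemma gam_gam (hpar : ∀ a b c, f a b c ≠ 0 → p b = p a + p c)
    (hjac : ∀ a b c d, ∑ e : Λ, f b e c * f a d e =
      ∑ e : Λ, f a e b * f e d c + sgn (p a * p b) * ∑ e : Λ, f a e c * f b d e)
    (hXX : ∀ a b, X a * X b = sgn ((p a + 1) * (p b + 1)) • (X b * X a))
    (hDD : ∀ a b, D a * D b = sgn ((p a + 1) * (p b + 1)) • (D b * D a))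
    (hDX : ∀ a b, D a * X b = sgn ((p a + 1) * (p b + 1)) • (X b * D a) + if a = b then 1 else 0)
    (a d : Λ) :
    gam p f X D a * gam p f X D d = sgn (p a * p d) • (gam p f X D d * gam p f X D a)
      + ∑ e, f a e d • gam p f X D e := by
  set G := gam p f X D a with hG
  have term : ∀ b c, (sgn (p d * p c) * f d b c) • (G * (X c * D b)) =
      sgn (p a * p d) • (sgn (p d * p c) * f d b c) • (X c * D b * G)
        + (∑ e, (sgn (p d * p c) * f d b c * (sgn (p a * p c) * f a e b)) • (X c * D e)
        - ∑ e, (sgn (p d * p c) * f d b c * (sgn (p a * p e) * f a c e)) • (X e * D b)) := by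
    intro b c
    by_cases hf : f d b c = 0
    · simp [hf]
    have hb := hpar _ _ _ hf
    have hs : sgn (p a * p d) = sgn (p a * (p c + 1)) * sgn (p a * (p b + 1)) := by
      rw [← sgn_add, hb]
      congr 1
      generalize p a = x, p c = y, p d = z
      decide +revert
    have hs2 : sgn (p a * p c) = sgn (p a * (p c + 1)) * sgn (p a) := by
      rw [← sgn_add]
      congr 1
      generalize p a = x, p c = y
      decide +revert
    rw [← mul_assoc, gam_X hpar hXX hDX, sub_mul, smul_mul_assoc, mul_assoc,
      gam_D hpar hDD hDX, hs, hs2, ← hG]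
    simp only [mul_add, mul_smul_comm, Finset.mul_sum, Finset.sum_mul, smul_mul_assoc,
      smul_add, smul_sub, Finset.smul_sum, smul_smul, mul_assoc, add_sub_assoc]
    congr 1
    congr 1; ring
  have expand : gam p f X D d = -∑ b : Λ, ∑ c : Λ, (sgn (p d * p c) * f d b c) • (X c * D b) := rfl
  rw [expand]
  simp only [neg_mul, mul_neg, Finset.sum_mul, Finset.mul_sum, smul_mul_assoc,
    mul_smul_comm, term, Finset.sum_add_distrib, smul_neg, Finset.smul_sum]
  rw [neg_add]
  congr 1
  have h1 : ∑ b, ∑ c, ∑ e, (sgn (p d * p c) * f d b c * (sgn (p a * p c) * f a e b)) • (X c * D e)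
      = ∑ b, ∑ c, (∑ e, sgn (p d * p c) * f d e c * (sgn (p a * p c) * f a b e)) • (X c * D b) := by
    simp only [Finset.sum_smul]
    rw [Finset.sum_comm]
    conv_rhs => rw [Finset.sum_comm]
    exact Finset.sum_congr rfl fun c _ => Finset.sum_comm
  have h2 : ∑ b, ∑ c, ∑ e, (sgn (p d * p c) * f d b c * (sgn (p a * p e) * f a c e)) • (X e * D b)
      = ∑ b, ∑ c, (∑ e, sgn (p d * p e) * f d b e * (sgn (p a * p c) * f a e c)) • (X c * D b) := by
    simp only [Finset.sum_smul]
    exact Finset.sum_congr rfl fun b _ => Finset.sum_comm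
  have h3 : ∑ e, f a e d • gam p f X D e
      = -∑ b, ∑ c, (∑ e, f a e d * (sgn (p e * p c) * f e b c)) • (X c * D b) := by
    simp only [gam, smul_neg, Finset.sum_neg_distrib, Finset.smul_sum, Finset.sum_smul, smul_smul]
    rw [Finset.sum_comm]
    congr 1
    exact Finset.sum_congr rfl fun b _ => Finset.sum_comm
  simp only [Finset.sum_sub_distrib]
  rw [h1, h2, h3, ← Finset.sum_sub_distrib]
  congr 1
  refine Finset.sum_congr rfl fun b _ => ?_
  rw [← Finset.sum_sub_distrib]
  refine Finset.sum_congr rfl fun c _ => ?_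
  rw [← sub_smul]
  congr 1
  -- all three coefficients carry the common sign `(-1)^{([a]+[d])[c]}`
  have k1 : ∑ e, sgn (p d * p c) * f d e c * (sgn (p a * p c) * f a b e)
      = sgn ((p a + p d) * p c) * ∑ e, f d e c * f a b e := by
    rw [Finset.mul_sum, add_mul, sgn_add]
    exact Finset.sum_congr rfl fun e _ => by ring
  have k2 : ∑ e, sgn (p d * p e) * f d b e * (sgn (p a * p c) * f a e c)
      = sgn ((p a + p d) * p c) * (sgn (p a * p d) * ∑ e, f a e c * f d b e) := by
    rw [Finset.mul_sum, Finset.mul_sum]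
    refine Finset.sum_congr rfl fun e _ => ?_
    by_cases hf : f a e c = 0
    · simp [hf]
    rw [hpar _ _ _ hf, mul_add, add_mul, sgn_add, sgn_add, mul_comm (p d) (p a)]
    ring
  have k3 : ∑ e, f a e d * (sgn (p e * p c) * f e b c)
      = sgn ((p a + p d) * p c) * ∑ e, f a e d * f e b c := by
    rw [Finset.mul_sum]
    refine Finset.sum_congr rfl fun e _ => ?_
    by_cases hf : f a e d = 0
    · simp [hf]
    rw [hpar _ _ _ hf]
    ring
  rw [k1, k2, k3, hjac a d c b]
  ring

lemma E_gam (hpar : ∀ a b c, f a b c ≠ 0 → p b = p a + p c)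
    (hEX : ∀ a b, E a * X b = sgn (p a * (p b + 1)) • (X b * E a))
    (hED : ∀ a b, E a * D b = sgn (p a * (p b + 1)) • (D b * E a)) (a d : Λ) :
    E a * gam p f X D d = sgn (p a * p d) • (gam p f X D d * E a) := by
  simp only [gam, neg_mul, mul_neg, Finset.sum_mul, Finset.mul_sum, smul_mul_assoc,
    mul_smul_comm, smul_neg, Finset.smul_sum]
  congr 1
  refine Finset.sum_congr rfl fun b _ => Finset.sum_congr rfl fun c _ => ?_
  by_cases hf : f d b c = 0
  · simp [hf]
  have hs : sgn (p a * p d) = sgn (p a * (p c + 1)) * sgn (p a * (p b + 1)) := by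
    rw [← sgn_add, hpar _ _ _ hf]
    congr 1
    generalize p a = x, p c = y, p d = z
    decide +revert
  rw [← mul_assoc, hEX, smul_mul_assoc, mul_assoc, hED, hs]
  simp only [mul_smul_comm, mul_assoc]
  module

lemma mul_gam_mem {S : Submodule ℂ R} {y : R} {a : Λ}
    (h : ∀ b c, f a b c ≠ 0 → y * (X c * D b) ∈ S) : y * gam p f X D a ∈ S := by
  simp only [gam, mul_neg, Finset.mul_sum, mul_smul_comm]
  refine S.neg_mem (S.sum_mem fun b _ => S.sum_mem fun c _ => ?_)
  by_cases hf : f a b c = 0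
  · simp [hf]
  exact S.smul_mem _ (h b c hf)

/-- If `G` acts on the family `X` by the coadjoint action of `E_a` and on the family `Y` by the
adjoint action, then it super-commutes with the contraction `Σ_d (-1)^{[d]} X_d Y_d`. -/
lemma contraction_invariant (hpar : ∀ a b c, f a b c ≠ 0 → p b = p a + p c)
    {Y : Λ → R} {G : R} {a : Λ}
    (hX : ∀ d, G * X d = sgn (p a * (p d + 1)) • (X d * G)
      - ∑ c, (sgn (p a * p c) * f a d c) • X c)
    (hY : ∀ d, G * Y d = sgn (p a * p d) • (Y d * G) + ∑ e, f a e d • Y e) :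
    G * ∑ d, sgn (p d) • (X d * Y d) = sgn (p a) • ((∑ d, sgn (p d) • (X d * Y d)) * G) := by
  have term : ∀ d, sgn (p d) • (G * (X d * Y d)) = sgn (p a) • sgn (p d) • (X d * Y d * G)
      + (∑ e, (sgn (p d) * sgn (p a * (p d + 1)) * f a e d) • (X d * Y e)
        - ∑ c, (sgn (p d) * (sgn (p a * p c) * f a d c)) • (X c * Y d)) := by
    intro d
    have hs : sgn (p a) = sgn (p a * (p d + 1)) * sgn (p a * p d) := by
      rw [← sgn_add]
      congr 1
      generalize p a = x, p d = z
      decide +revert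
    rw [← mul_assoc, hX, sub_mul, smul_mul_assoc, mul_assoc, hY, hs]
    simp only [mul_add, mul_smul_comm, Finset.mul_sum, Finset.sum_mul, smul_mul_assoc,
      smul_add, smul_sub, Finset.smul_sum, smul_smul, mul_assoc, add_sub_assoc]
    congr 1
    congr 1; ring
  simp only [Finset.mul_sum, Finset.sum_mul, smul_mul_assoc, mul_smul_comm, term,
    Finset.sum_add_distrib, Finset.sum_sub_distrib, Finset.smul_sum]
  rw [add_eq_left, sub_eq_zero]
  conv_rhs => rw [Finset.sum_comm]
  refine Finset.sum_congr rfl fun c _ => Finset.sum_congr rfl fun d _ => ?_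
  by_cases hf : f a d c = 0
  · simp [hf]
  have hs : sgn (p c) * sgn (p a * (p c + 1)) = sgn (p d) * sgn (p a * p c) := by
    rw [← sgn_add, ← sgn_add, hpar _ _ _ hf]
    congr 1
    generalize p a = x, p c = y
    decide +revert
  rw [hs, mul_assoc]

/-- Passage from basis elements `E_a` to a homogeneous element `Σ_a u_a E_a` of parity `ε`. -/
lemma invariant_of_basis {G : Λ → R} {δ : R} (h : ∀ a, G a * δ = sgn (p a) • (δ * G a))
    (ε : ZMod 2) (u : Λ → ℂ) (hu : ∀ a, u a ≠ 0 → p a = ε) :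
    (∑ a, u a • G a) * δ - sgn ε • (δ * ∑ a, u a • G a) = 0 := by
  rw [sub_eq_zero, Finset.sum_mul, Finset.mul_sum, Finset.smul_sum]
  refine Finset.sum_congr rfl fun a _ => ?_
  by_cases ha : u a = 0
  · simp [ha]
  rw [smul_mul_assoc, mul_smul_comm, h, hu a ha, smul_comm]

end Abstract

/-! ### The relations in `W ⊗ U(g)` -/

section Relations

variable (p : Λ → ZMod 2) (f : Λ → Λ → Λ → ℂ)

lemma XU_XU (a b : Λ) :
    XU p f a * XU p f b = sgn ((p a + 1) * (p b + 1)) • (XU p f b * XU p f a) := by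
  have h := RingQuot.mkAlgHom_rel ℂ (WURel.XX (p := p) (f := f) a b)
  simp only [map_mul, map_smul] at h
  exact h

lemma DU_DU (a b : Λ) :
    DU p f a * DU p f b = sgn ((p a + 1) * (p b + 1)) • (DU p f b * DU p f a) := by
  have h := RingQuot.mkAlgHom_rel ℂ (WURel.DD (p := p) (f := f) a b)
  simp only [map_mul, map_smul] at h
  exact h

lemma DU_XU (a b : Λ) :
    DU p f a * XU p f b = sgn ((p a + 1) * (p b + 1)) • (XU p f b * DU p f a)
      + if a = b then 1 else 0 := by
  have h := RingQuot.mkAlgHom_rel ℂ (WURel.DX (p := p) (f := f) a b)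
  simp only [map_mul, map_smul, map_add, apply_ite (RingQuot.mkAlgHom ℂ (WURel p f)),
    map_one, map_zero] at h
  exact h

lemma EU_EU (a b : Λ) :
    EU p f a * EU p f b = sgn (p a * p b) • (EU p f b * EU p f a)
      + ∑ e, f a e b • EU p f e := by
  have h := RingQuot.mkAlgHom_rel ℂ (WURel.EE (p := p) (f := f) a b)
  simp only [map_mul, map_smul, map_add, map_sum] at h
  exact h

lemma EU_XU (a b : Λ) :
    EU p f a * XU p f b = sgn (p a * (p b + 1)) • (XU p f b * EU p f a) := by
  have h := RingQuot.mkAlgHom_rel ℂ (WURel.EX (p := p) (f := f) a b)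
  simp only [map_mul, map_smul] at h
  exact h

lemma EU_DU (a b : Λ) :
    EU p f a * DU p f b = sgn (p a * (p b + 1)) • (DU p f b * EU p f a) := by
  have h := RingQuot.mkAlgHom_rel ℂ (WURel.ED (p := p) (f := f) a b)
  simp only [map_mul, map_smul] at h
  exact h

lemma GamU_eq_gam (a : Λ) : GamU p f a = gam p f (XU p f) (DU p f) a := rfl

end Relations

/-! ### Oddness and invariance -/

lemma delta1_odd (p : Λ → ZMod 2) (f : Λ → Λ → Λ → ℂ) : delta1 p f ∈ WUpar p f 1 := by
  refine Submodule.sum_mem _ fun a _ => Submodule.smul_mem _ _ (Submodule.subset_span ?_)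
  refine ⟨[.X a, .E a], by simp [XU, EU], ?_⟩
  simp only [List.map_cons, List.map_nil, List.sum_cons, List.sum_nil, WUGen.parity]
  generalize p a = x
  decide +revert

lemma delta2_odd {p : Λ → ZMod 2} {f : Λ → Λ → Λ → ℂ}
    (hpar : ∀ a b c, f a b c ≠ 0 → p b = p a + p c) : delta2 p f ∈ WUpar p f 1 := by
  refine Submodule.smul_mem _ _ (Submodule.sum_mem _ fun a _ => Submodule.smul_mem _ _ ?_)
  refine mul_gam_mem fun b c hf => Submodule.subset_span ?_
  refine ⟨[.X a, .X c, .D b], by simp [XU, DU], ?_⟩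
  simp only [List.map_cons, List.map_nil, List.sum_cons, List.sum_nil, WUGen.parity,
    hpar _ _ _ hf]
  generalize p a = x, p c = y
  decide +revert

section Invariance

variable {p : Λ → ZMod 2} {f : Λ → Λ → Λ → ℂ}

lemma total_X (hpar : ∀ a b c, f a b c ≠ 0 → p b = p a + p c) (a d : Λ) :
    (GamU p f a + EU p f a) * XU p f d =
      sgn (p a * (p d + 1)) • (XU p f d * (GamU p f a + EU p f a))
        - ∑ c, (sgn (p a * p c) * f a d c) • XU p f c := by
  rw [add_mul, EU_XU, GamU_eq_gam, gam_X hpar (XU_XU p f) (DU_XU p f), mul_add (XU p f d), smul_add]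
  abel

lemma delta1_invariant (hpar : ∀ a b c, f a b c ≠ 0 → p b = p a + p c) (a : Λ) :
    (GamU p f a + EU p f a) * delta1 p f =
      sgn (p a) • (delta1 p f * (GamU p f a + EU p f a)) := by
  refine contraction_invariant hpar (total_X hpar a) fun d => ?_
  have h : GamU p f a * EU p f d = sgn (p a * p d) • (EU p f d * GamU p f a) := by
    rw [GamU_eq_gam, E_gam hpar (EU_XU p f) (EU_DU p f), smul_smul, mul_comm (p d),
      sgn_mul_self, one_smul]
  rw [add_mul, EU_EU, h, mul_add (EU p f d), smul_add]
  abel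

lemma delta2_invariant (hpar : ∀ a b c, f a b c ≠ 0 → p b = p a + p c)
    (hjac : ∀ a b c d, ∑ e : Λ, f b e c * f a d e =
      ∑ e : Λ, f a e b * f e d c + sgn (p a * p b) * ∑ e : Λ, f a e c * f b d e) (a : Λ) :
    (GamU p f a + EU p f a) * delta2 p f =
      sgn (p a) • (delta2 p f * (GamU p f a + EU p f a)) := by
  rw [delta2, mul_smul_comm, smul_mul_assoc, smul_comm (sgn (p a))]
  congr 1
  refine contraction_invariant hpar (total_X hpar a) fun d => ?_
  simp only [GamU_eq_gam]
  rw [add_mul, gam_gam hpar hjac (XU_XU p f) (DU_DU p f) (DU_XU p f),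
    E_gam hpar (EU_XU p f) (EU_DU p f), mul_add (gam p f (XU p f) (DU p f) d), smul_add]
  abel

end Invariance

/-- Lemma 3.6 of the paper: `δ₁`, `δ₂`, and hence `δ = δ₁ + δ₂`, are odd `g`-invariant
elements of `W ⊗ U(g)`: `[Γ(A) ⊗ 1 + 1 ⊗ A, δᵢ] = 0` for every homogeneous `A ∈ g`. -/
theorem delta_is_odd_invariant
    (p : Λ → ZMod 2) (f : Λ → Λ → Λ → ℂ)
    (hpar : ∀ a b c, f a b c ≠ 0 → p b = p a + p c)
    (hskew : ∀ a b c, f a b c = -sgn (p a * p c) * f c b a)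
    (hjac : ∀ a b c d, ∑ e : Λ, f b e c * f a d e =
      ∑ e : Λ, f a e b * f e d c + sgn (p a * p b) * ∑ e : Λ, f a e c * f b d e) :
    -- δ₁ and δ₂ (hence δ) are odd:
    delta1 p f ∈ WUpar p f 1 ∧
    delta2 p f ∈ WUpar p f 1 ∧
    -- [Γ(A) ⊗ 1 + 1 ⊗ A, δ₁] = 0, [Γ(A) ⊗ 1 + 1 ⊗ A, δ₂] = 0, and
    -- [Γ(A) ⊗ 1 + 1 ⊗ A, δ] = 0 for every homogeneous A ∈ g:
    ∀ (ε : ZMod 2) (u : Λ → ℂ), (∀ a, u a ≠ 0 → p a = ε) →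
      ((∑ a : Λ, u a • (GamU p f a + EU p f a)) * delta1 p f
          - sgn ε • (delta1 p f * ∑ a : Λ, u a • (GamU p f a + EU p f a)) = 0) ∧
      ((∑ a : Λ, u a • (GamU p f a + EU p f a)) * delta2 p f
          - sgn ε • (delta2 p f * ∑ a : Λ, u a • (GamU p f a + EU p f a)) = 0) ∧
      ((∑ a : Λ, u a • (GamU p f a + EU p f a)) * deltaWU p f
          - sgn ε • (deltaWU p f * ∑ a : Λ, u a • (GamU p f a + EU p f a)) = 0) := by
  refine ⟨delta1_odd p f, delta2_odd hpar, fun ε u hu => ⟨?_, ?_, ?_⟩⟩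
  · exact invariant_of_basis (delta1_invariant hpar) ε u hu
  · exact invariant_of_basis (delta2_invariant hpar hjac) ε u hu
  · refine invariant_of_basis (fun a => ?_) ε u hu
    rw [deltaWU, mul_add, delta1_invariant hpar, delta2_invariant hpar hjac, add_mul, smul_add]
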